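/- arXiv:2510.22259 — 2 statements merged into one kernel-verified Lean document; each statement's English description precedes it below -/
import Mathlib

section
/- Let s ≥ 2. The extended code of C_{(2,n,3,1)}, where n = 2^{2s}+2^s+1, has length n+1, dimension n − 3s, and minimum distance exactly 4, and it is distance-optimal with respect to the sphere packing bound: every binary linear code of length n+1 and dimension n − 3s has minimum distance at most 4. -/
open Finset

/-- The binary cyclic (BCH-type) code of length `n` over GF(2), consisting of all
words `c` such that `∑ i, c i • β ^ (j * i) = 0` for every `j` in the check set `J`. -/
def BCHCode {F : Type} [Field F] [Algebra (ZMod 2) F] (n : ℕ) (β : F) (J : Finset ℕ) :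
    Submodule (ZMod 2) (Fin n → ZMod 2) where
  carrier := {c | ∀ j ∈ J, ∑ i : Fin n, c i • β ^ (j * (i : ℕ)) = 0}
  add_mem' := by
    intro a b ha hb j hj
    simp only [Set.mem_setOf_eq, Pi.add_apply, add_smul, Finset.sum_add_distrib] at *
    rw [ha j hj, hb j hj, add_zero]
  zero_mem' := by
    intro j hj
    simp
  smul_mem' := by
    intro r c hc j hj
    simp only [Set.mem_setOf_eq, Pi.smul_apply, smul_assoc, ← Finset.smul_sum] at *
    rw [hc j hj, smul_zero]

/-- The (Euclidean) dual of a binary linear code. -/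
def dualCode {N : ℕ} (C : Submodule (ZMod 2) (Fin N → ZMod 2)) :
    Submodule (ZMod 2) (Fin N → ZMod 2) where
  carrier := {b | ∀ c ∈ C, ∑ i, b i * c i = 0}
  add_mem' := by
    intro a b ha hb c hc
    simp only [Set.mem_setOf_eq, Pi.add_apply, add_mul, Finset.sum_add_distrib] at *
    rw [ha c hc, hb c hc, add_zero]
  zero_mem' := by
    intro c hc
    simp
  smul_mem' := by
    intro r b hb c hc
    simp only [Set.mem_setOf_eq, Pi.smul_apply, smul_eq_mul, mul_assoc, ← Finset.mul_sum] at *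
    rw [hb c hc, mul_zero]

/-- The linear map appending an overall parity-check coordinate. -/
def extendMap (N : ℕ) : (Fin N → ZMod 2) →ₗ[ZMod 2] (Fin (N + 1) → ZMod 2) where
  toFun c := fun j => if h : (j : ℕ) < N then c ⟨j, h⟩ else ∑ i, c i
  map_add' a b := by
    funext j
    by_cases h : (j : ℕ) < N <;> simp [h, Finset.sum_add_distrib]
  map_smul' r c := by
    funext j
    by_cases h : (j : ℕ) < N <;> simp [h, Finset.mul_sum]

/-- The extended code of a binary linear code. -/
def extendedCode {N : ℕ} (C : Submodule (ZMod 2) (Fin N → ZMod 2)) :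
    Submodule (ZMod 2) (Fin (N + 1) → ZMod 2) :=
  C.map (extendMap N)

/-- The minimum distance (= minimum nonzero Hamming weight) of a binary linear code. -/
noncomputable def minDist {N : ℕ} (C : Submodule (ZMod 2) (Fin N → ZMod 2)) : ℕ :=
  sInf {w | ∃ c ∈ C, c ≠ 0 ∧ hammingNorm c = w}

/-- The number of codewords of Hamming weight `w` in a binary linear code. -/
noncomputable def weightCount {N : ℕ} (C : Submodule (ZMod 2) (Fin N → ZMod 2)) (w : ℕ) : ℕ :=
  Set.ncard {c : Fin N → ZMod 2 | c ∈ C ∧ hammingNorm c = w}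

/-- The 2-cyclotomic coset of `i` modulo `n`. -/
def cycCoset (n i : ℕ) : Set ℕ := {x | ∃ j : ℕ, x = i * 2 ^ j % n}

/-- The coset leader (smallest element) of the 2-cyclotomic coset of `i` modulo `n`. -/
noncomputable def cosetLeader (n i : ℕ) : ℕ := sInf (cycCoset n i)

theorem hn_ind {N : ℕ} (S : Finset (Fin N)) (j : Fin N) :
    ((fun j => if j ∈ S then (1 : ZMod 2) else 0) : Fin N → ZMod 2) j ≠ 0 ↔ j ∈ S := by
  by_cases h : j ∈ S <;> simp [h]

theorem packing {N k m : ℕ} (D : Submodule (ZMod 2) (Fin N → ZMod 2))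
    (hD : Module.finrank (ZMod 2) D = k) (hk : k + m = N) (h : 2 ^ m < N.choose 2) :
    ∃ c ∈ D, c ≠ 0 ∧ hammingNorm c ≤ 4 := by
  classical
  let Q := (Fin N → ZMod 2) ⧸ D
  have hfr : Module.finrank (ZMod 2) Q = m := by
    have := D.finrank_quotient_add_finrank
    rw [hD, Module.finrank_fin_fun] at this
    show Module.finrank (ZMod 2) ((Fin N → ZMod 2) ⧸ D) = m
    omega
  have hc : Nat.card Q = 2 ^ m := by
    rw [Module.natCard_eq_pow_finrank (K := ZMod 2), hfr, Nat.card_zmod]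
  haveI : Finite Q := Module.finite_of_finite (ZMod 2)
  haveI : Fintype Q := Fintype.ofFinite Q
  let ind : Finset (Fin N) → (Fin N → ZMod 2) := fun S j => if j ∈ S then 1 else 0
  let f : Finset (Fin N) → Q := fun S => D.mkQ (ind S)
  obtain ⟨S, hS, T, hT, hne, hf⟩ :=
    Finset.exists_ne_map_eq_of_card_lt_of_maps_to (s := Finset.powersetCard 2 Finset.univ)
      (t := (Finset.univ : Finset Q)) (f := f)
      (by rw [Finset.card_powersetCard, Finset.card_univ, Finset.card_univ, Fintype.card_fin,
            ← Nat.card_eq_fintype_card, hc]; exact h)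
      (by intro _ _; simp)
  refine ⟨ind S - ind T, ?_, ?_, ?_⟩
  · exact (Submodule.Quotient.eq D).1 hf
  · intro h0
    apply hne
    ext j
    have h1 : ind S = ind T := sub_eq_zero.1 h0
    rw [← hn_ind S j, ← hn_ind T j]
    exact Iff.of_eq (congrArg (fun g : Fin N → ZMod 2 => g j ≠ 0) h1)
  · have hsub : (Finset.univ.filter fun j => (ind S - ind T) j ≠ 0) ⊆ S ∪ T := by
      intro j hj
      rw [Finset.mem_filter] at hj
      by_contra hcon
      rw [Finset.mem_union, not_or] at hcon
      apply hj.2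
      simp [ind, hcon.1, hcon.2]
    have h2 := Finset.card_le_card hsub
    have h3 := Finset.card_union_le S T
    rw [(Finset.mem_powersetCard.1 hS).2, (Finset.mem_powersetCard.1 hT).2] at h3
    exact h2.trans h3

theorem extend_inj (N : ℕ) : Function.Injective (extendMap N) := by
  intro a b h
  funext j
  have := congrFun h j.castSucc
  simpa [extendMap] using this

theorem beta_span {F : Type} [Field F] [Algebra (ZMod 2) F] [Finite F] (s n : ℕ) (hs : 1 ≤ s)
    (hF : Module.finrank (ZMod 2) F = 3 * s) (hn : 2 ^ (2 * s) < n) (β : F)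
    (hβ : orderOf β = n) : Algebra.adjoin (ZMod 2) {β} = ⊤ := by
  have hint : IsIntegral (ZMod 2) β := IsIntegral.of_finite (ZMod 2) β
  let K := IntermediateField.adjoin (ZMod 2) {β}
  have hK : K.toSubalgebra = Algebra.adjoin (ZMod 2) {β} :=
    IntermediateField.adjoin_simple_toSubalgebra_of_isAlgebraic hint.isAlgebraic
  rw [← hK]
  suffices K = ⊤ by rw [this]; rfl
  let b : K := ⟨β, IntermediateField.mem_adjoin_simple_self _ _⟩
  have hb : orderOf b = n := by
    rw [← hβ]
    exact (orderOf_injective (algebraMap K F).toMonoidHom (algebraMap K F).injective b).symm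
  have hle : n ≤ Nat.card K := hb ▸ orderOf_le_card
  rw [Module.natCard_eq_pow_finrank (K := ZMod 2), Nat.card_zmod] at hle
  have hlt : 2 * s < Module.finrank (ZMod 2) K :=
    (Nat.pow_lt_pow_iff_right (by norm_num)).1 (lt_of_lt_of_le hn hle)
  have hmul := Module.finrank_mul_finrank (ZMod 2) K F
  rw [hF] at hmul
  have h1 : Module.finrank K F = 1 := by
    have h0 : 0 < Module.finrank K F := Module.finrank_pos
    by_contra hne
    have : 2 ≤ Module.finrank K F := by omega
    nlinarith
  exact IntermediateField.finrank_eq_one_iff_eq_top.1 h1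

/-- The syndrome map. -/
noncomputable def synd {F : Type} [Field F] [Algebra (ZMod 2) F] (n : ℕ) (β : F) :
    (Fin n → ZMod 2) →ₗ[ZMod 2] F :=
  Fintype.linearCombination (ZMod 2) (fun i : Fin n => β ^ (i : ℕ))

theorem mem_bch {F : Type} [Field F] [Algebra (ZMod 2) F] (n : ℕ) (β : F) (c : Fin n → ZMod 2) :
    c ∈ BCHCode n β {1} ↔ ∑ i : Fin n, c i • β ^ (i : ℕ) = 0 := by
  show (∀ j ∈ ({1} : Finset ℕ), ∑ i : Fin n, c i • β ^ (j * (i : ℕ)) = 0) ↔ _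
  simp

theorem bch_finrank {F : Type} [Field F] [Algebra (ZMod 2) F] [Finite F] (s n : ℕ) (hs : 1 ≤ s)
    (hF : Module.finrank (ZMod 2) F = 3 * s) (hn : 2 ^ (2 * s) < n) (β : F)
    (hβ : orderOf β = n) :
    Module.finrank (ZMod 2) (BCHCode n β {1}) = n - 3 * s := by
  have hker : BCHCode n β {1} = LinearMap.ker (synd n β) := by
    ext c
    rw [mem_bch, LinearMap.mem_ker, synd, Fintype.linearCombination_apply]
  have hr : LinearMap.range (synd n β) = ⊤ := by
    rw [synd, Fintype.range_linearCombination, eq_top_iff]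
    have h := beta_span s n hs hF hn β hβ
    intro x _
    have hx : x ∈ Algebra.adjoin (ZMod 2) {β} := by rw [h]; trivial
    rw [← Subalgebra.mem_toSubmodule, Algebra.adjoin_eq_span] at hx
    refine Submodule.span_mono ?_ hx
    rintro y hy
    obtain ⟨k, rfl⟩ := Submonoid.mem_closure_singleton.1 hy
    have hpos : 0 < n := lt_of_le_of_lt (Nat.zero_le _) hn
    refine ⟨⟨k % n, Nat.mod_lt _ hpos⟩, ?_⟩
    show β ^ (k % n) = β ^ k
    rw [← hβ, pow_mod_orderOf]
  have := (synd n β).finrank_range_add_finrank_ker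
  rw [hr, finrank_top, hF, Module.finrank_fin_fun, ← hker] at this
  omega

theorem ext_even {N : ℕ} (c : Fin N → ZMod 2) : Even (hammingNorm (extendMap N c)) := by
  have h1 : ∑ j, extendMap N c j = 0 := by
    rw [Fin.sum_univ_castSucc]
    simp [extendMap, CharTwo.add_self_eq_zero]
  have h2 : ∑ j, extendMap N c j = (hammingNorm (extendMap N c) : ZMod 2) := by
    rw [hammingNorm, Finset.card_filter, Nat.cast_sum]
    refine Finset.sum_congr rfl fun j _ => ?_
    generalize extendMap N c j = z
    revert z
    decide
  rw [h2] at h1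
  exact (ZMod.natCast_eq_zero_iff_even).1 h1

theorem ext_ne_two {F : Type} [Field F] [Algebra (ZMod 2) F] (n : ℕ) (β : F)
    (hβ : orderOf β = n) (hβ0 : β ≠ 0) (c : Fin n → ZMod 2) (hc : c ∈ BCHCode n β {1}) :
    hammingNorm (extendMap n c) ≠ 2 := by
  intro h
  haveI : CharP F 2 := charP_of_injective_algebraMap (algebraMap (ZMod 2) F).injective 2
  let g : Fin (n + 1) → F := Fin.snoc (α := fun _ => F) (fun i : Fin n => β ^ (i : ℕ)) 0
  have hg : Function.Injective g := by
    refine Fin.snoc_injective_iff.2 ⟨?_, ?_⟩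
    · intro i j hij
      exact Fin.ext (pow_injOn_Iio_orderOf (by simp [hβ]) (by simp [hβ]) hij)
    · rintro ⟨i, hi⟩
      exact pow_ne_zero _ hβ0 hi
  have hsum : ∑ j, extendMap n c j • g j = 0 := by
    rw [mem_bch] at hc
    rw [Fin.sum_univ_castSucc]
    simpa [g, extendMap] using hc
  rw [hammingNorm, Finset.card_eq_two] at h
  obtain ⟨a, b, hab, hS⟩ := h
  have one_of : ∀ z : ZMod 2, z ≠ 0 → z = 1 := by decide
  have ha : extendMap n c a = 1 := one_of _ (by
    have : a ∈ ({a, b} : Finset (Fin (n+1))) := by simp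
    rw [← hS] at this; exact (Finset.mem_filter.1 this).2)
  have hb : extendMap n c b = 1 := one_of _ (by
    have : b ∈ ({a, b} : Finset (Fin (n+1))) := by simp
    rw [← hS] at this; exact (Finset.mem_filter.1 this).2)
  have h2 : ∑ j ∈ ({a, b} : Finset (Fin (n+1))), extendMap n c j • g j = 0 := by
    rw [← hsum]
    refine Finset.sum_subset (Finset.subset_univ _) ?_
    intro x _ hx
    rw [← hS] at hx
    have : extendMap n c x = 0 := by simpa using hx
    rw [this, zero_smul]
  rw [Finset.sum_pair hab, ha, hb, one_smul, one_smul] at h2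
  exact hab (hg (CharTwo.add_eq_zero.1 h2))

theorem stmt_12 (s : ℕ) (hs : 2 ≤ s) (n : ℕ) (hn : n = 2 ^ (2 * s) + 2 ^ s + 1)
    (α : GaloisField 2 (3 * s)) (hα : orderOf α = 2 ^ (3 * s) - 1)
    (β : GaloisField 2 (3 * s)) (hβ : β = α ^ (2 ^ s - 1)) :
    Module.finrank (ZMod 2) (extendedCode (BCHCode n β {1})) = n - 3 * s ∧
    minDist (extendedCode (BCHCode n β {1})) = 4 ∧
    ∀ D : Submodule (ZMod 2) (Fin (n + 1) → ZMod 2),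
      Module.finrank (ZMod 2) D = n - 3 * s → minDist D ≤ 4 := by
  have hq : 4 ≤ 2 ^ s := by
    calc 4 = 2 ^ 2 := by norm_num
      _ ≤ 2 ^ s := Nat.pow_le_pow_right (by norm_num) hs
  have hsq : s < 2 ^ s := Nat.lt_two_pow_self
  have h2s : 2 ^ (2 * s) = 2 ^ s * 2 ^ s := by rw [two_mul, pow_add]
  have h3s : 2 ^ (3 * s) = 2 ^ s * 2 ^ s * 2 ^ s := by rw [← pow_add, ← pow_add]; congr 1; ring
  have hnlt : 2 ^ (2 * s) < n := by omega
  have h3n : 3 * s ≤ n := by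
    rw [hn, h2s]; nlinarith
  have hfac : 2 ^ (3 * s) - 1 = (2 ^ s - 1) * n := by
    rw [hn, h2s, h3s]
    obtain ⟨r, hr⟩ : ∃ r, 2 ^ s = r + 1 := ⟨2 ^ s - 1, by omega⟩
    rw [hr, Nat.add_sub_cancel, Nat.sub_eq_iff_eq_add (by nlinarith)]
    ring
  have hord : orderOf β = n := by
    rw [hβ, orderOf_pow_of_dvd (by omega) (by rw [hα, hfac]; exact dvd_mul_right _ _), hα, hfac]
    exact Nat.mul_div_cancel_left _ (by omega)
  have hβ0 : β ≠ 0 := by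
    rintro rfl
    rw [orderOf_zero] at hord
    omega
  have hF : Module.finrank (ZMod 2) (GaloisField 2 (3 * s)) = 3 * s :=
    GaloisField.finrank 2 (by omega)
  have hdim : Module.finrank (ZMod 2) (extendedCode (BCHCode n β {1})) = n - 3 * s := by
    rw [extendedCode, ← (Submodule.equivMapOfInjective _ (extend_inj n) (BCHCode n β {1})).finrank_eq]
    exact bch_finrank s n (by omega) hF hnlt β hord
  have hpack : ∀ D : Submodule (ZMod 2) (Fin (n + 1) → ZMod 2),
      Module.finrank (ZMod 2) D = n - 3 * s → ∃ c ∈ D, c ≠ 0 ∧ hammingNorm c ≤ 4 := by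
    intro D hD
    refine packing (m := 3 * s + 1) D hD (by omega) ?_
    have hch : (n + 1).choose 2 * 2 = (n + 1) * n := by
      have := Nat.triangle_succ n
      rw [Nat.choose_two_right, Nat.add_sub_cancel]
      exact Nat.div_mul_cancel (by rw [mul_comm]; exact (Nat.even_mul_succ_self n).two_dvd)
    have : 2 ^ (3 * s + 1) * 2 < (n + 1) * n := by
      rw [pow_succ, hn, h2s, h3s]
      generalize 2 ^ s = q at hq
      have : q * q * q * 4 ≤ q * q * q * q := Nat.mul_le_mul_left _ hq
      nlinarith
    omega
  have hle : ∀ D : Submodule (ZMod 2) (Fin (n + 1) → ZMod 2),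
      Module.finrank (ZMod 2) D = n - 3 * s → minDist D ≤ 4 := by
    intro D hD
    obtain ⟨c, hc, hc0, h4⟩ := hpack D hD
    have h5 : minDist D ≤ hammingNorm c := Nat.sInf_le ⟨c, hc, hc0, rfl⟩
    exact h5.trans h4
  refine ⟨hdim, le_antisymm (hle _ hdim) ?_, hle⟩
  obtain ⟨c, hc, hc0, -⟩ := hpack _ hdim
  refine le_csInf ⟨_, c, hc, hc0, rfl⟩ ?_
  rintro w ⟨x, hx, hx0, rfl⟩
  obtain ⟨y, hy, rfl⟩ := hx
  have h1 := ext_even y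
  have h2 := ext_ne_two n β hord hβ0 y hy
  have h3 : hammingNorm (extendMap n y) ≠ 0 := hammingNorm_ne_zero_iff.2 hx0
  obtain ⟨k, hk⟩ := h1
  omega
end

section
/- Let s ≥ 4 and set w1 = (2^{2s−1} + (−1)^s·2^s)/3 and w2 = (2^{2s−1} − (−1)^s·2^{s−1})/3. The extended code of C_{(2,n,3,1)}, where n = (4^s−1)/3, has length n+1, dimension n − 2s, and minimum distance exactly 4, and it is distance-optimal with respect to the sphere packing bound: every binary linear code of length n+1 and dimension n − 2s has minimum distance at most 4. Furthermore, the dual of this extended code has dimension 2s + 1 and its weight distribution is: exactly 1 codeword of weight 0, exactly n codewords of weight w1, exactly 2n codewords of weight w2, exactly n codewords of weight n+1−w1, exactly 2n codewords of weight n+1−w2, exactly 1 codeword of weight n+1, and no codewords of any other weight. -/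
open Finset

def sgn2 (b : ZMod 2) : ℤ := if b = 0 then 1 else -1

lemma sgn2_add (a b : ZMod 2) : sgn2 (a + b) = sgn2 a * sgn2 b := by
  revert a b; decide

lemma sgn2_zero : sgn2 0 = 1 := rfl
lemma sgn2_one : sgn2 1 = -1 := rfl

lemma sum_sgn2 {N : ℕ} (v : Fin N → ZMod 2) :
    ∑ i, sgn2 (v i) = (N : ℤ) - 2 * (hammingNorm v : ℤ) := by
  have h : ∀ i, sgn2 (v i) = 1 - 2 * (if v i ≠ 0 then 1 else 0) := by
    intro i
    unfold sgn2
    by_cases h : v i = 0 <;> simp [h]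
  simp only [h, Finset.sum_sub_distrib, ← Finset.mul_sum, hammingNorm, Finset.card_filter]
  simp

section field
set_option linter.unusedSectionVars false
variable {F : Type} [Field F] [Fintype F] [Algebra (ZMod 2) F]

lemma exists_trace_one (c : F) (hc : c ≠ 0) : ∃ y, Algebra.trace (ZMod 2) F (c * y) = 1 := by
  by_contra hcon
  push Not at hcon
  apply hc
  have hnd := traceForm_nondegenerate (ZMod 2) F
  apply hnd.1 c
  intro y
  have := hcon y
  rw [Algebra.traceForm_apply]
  generalize Algebra.trace (ZMod 2) F (c * y) = t at *
  revert this; revert t; decide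

lemma sum_char (c : F) (hc : c ≠ 0) : ∑ x : F, sgn2 (Algebra.trace (ZMod 2) F (c * x)) = 0 := by
  obtain ⟨y, hy⟩ := exists_trace_one c hc
  have h := Equiv.sum_comp (Equiv.addRight y) (fun x => sgn2 (Algebra.trace (ZMod 2) F (c * x)))
  simp only [Equiv.coe_addRight, mul_add, map_add, sgn2_add, hy, sgn2_one, mul_neg, mul_one,
    Finset.sum_neg_distrib] at h
  linarith

lemma trace_sq (x : F) : Algebra.trace (ZMod 2) F (x ^ 2) = Algebra.trace (ZMod 2) F x := by
  have := Algebra.trace_eq_of_algEquiv (FiniteField.frobeniusAlgEquivOfAlgebraic (ZMod 2) F) x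
  simpa [FiniteField.frobeniusAlgEquivOfAlgebraic] using this

lemma inner_sum_cube [DecidableEq F] (a u : F) (ha : a ≠ 0) :
    ∑ x : F, sgn2 (Algebra.trace (ZMod 2) F (a * (x ^ 2 * u + x * u ^ 2))) =
      (Fintype.card F : ℤ) * (if u = 0 then 1 else 0) +
      (Fintype.card F : ℤ) * (if a * u ^ 3 = 1 then 1 else 0) := by
  have : CharP F 2 := charP_of_injective_algebraMap (algebraMap (ZMod 2) F).injective 2
  have h1 : ∀ x : F, Algebra.trace (ZMod 2) F (a * (x ^ 2 * u + x * u ^ 2)) =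
      Algebra.trace (ZMod 2) F ((a * u + a ^ 2 * u ^ 4) * x ^ 2) := by
    intro x
    have : a * (x ^ 2 * u + x * u ^ 2) = a * u * x ^ 2 + a * u ^ 2 * x := by ring
    rw [this, map_add, ← trace_sq (a * u ^ 2 * x), ← map_add]
    congr 1; ring
  have h2 := Function.Bijective.sum_comp
    ((frobeniusEquiv F 2).bijective)
    (fun y => sgn2 (Algebra.trace (ZMod 2) F ((a * u + a ^ 2 * u ^ 4) * y)))
  simp only [frobeniusEquiv_apply, frobenius_def] at h2
  simp only [h1, h2]
  by_cases hu : u = 0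
  · simp [hu, sgn2_zero]
  by_cases hau : a * u ^ 3 = 1
  · have : a * u + a ^ 2 * u ^ 4 = 0 := by
      have : a * u + a ^ 2 * u ^ 4 = a * u * (1 + a * u ^ 3) := by ring
      rw [this, hau, CharTwo.add_self_eq_zero, mul_zero]
    simp [this, hau, sgn2_zero, hu]
  · rw [sum_char]
    · simp [hu, hau]
    · have : a * u + a ^ 2 * u ^ 4 = a * u * (1 + a * u ^ 3) := by ring
      rw [this]
      refine mul_ne_zero (mul_ne_zero ha hu) ?_
      intro h
      exact hau (CharTwo.add_eq_zero.mp h).symm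

lemma S_sq [DecidableEq F] (a : F) (ha : a ≠ 0) (h1 : Algebra.trace (ZMod 2) F 1 = 0) :
    (∑ x : F, sgn2 (Algebra.trace (ZMod 2) F (a * x ^ 3))) ^ 2 =
      (Fintype.card F : ℤ) * (1 + ∑ x : F, if a * x ^ 3 = 1 then 1 else 0) := by
  have : CharP F 2 := charP_of_injective_algebraMap (algebraMap (ZMod 2) F).injective 2
  have h2 : (2 : F) = 0 := CharTwo.two_eq_zero
  have key : ∀ x : F, ∑ y : F, sgn2 (Algebra.trace (ZMod 2) F (a * x ^ 3)) *
      sgn2 (Algebra.trace (ZMod 2) F (a * y ^ 3)) =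
      ∑ u : F, sgn2 (Algebra.trace (ZMod 2) F (a * u ^ 3)) *
        sgn2 (Algebra.trace (ZMod 2) F (a * (x ^ 2 * u + x * u ^ 2))) := by
    intro x
    rw [← Equiv.sum_comp (Equiv.addLeft x)]
    refine Finset.sum_congr rfl fun u _ => ?_
    rw [← sgn2_add, ← sgn2_add, ← map_add, ← map_add]
    congr 2
    simp only [Equiv.coe_addLeft]
    linear_combination (a * x ^ 3 + a * x ^ 2 * u + a * x * u ^ 2) * h2
  rw [sq, Finset.sum_mul_sum, Finset.sum_congr rfl fun x _ => key x, Finset.sum_comm]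
  simp only [← Finset.mul_sum, inner_sum_cube a _ ha]
  rw [mul_add, mul_one, Finset.mul_sum]
  rw [Finset.sum_congr rfl fun u _ => mul_add _ _ _, Finset.sum_add_distrib]
  congr 1
  · rw [Finset.sum_eq_single 0] <;> simp +contextual [sgn2_zero]
  · refine Finset.sum_congr rfl fun u _ => ?_
    by_cases h : a * u ^ 3 = 1 <;> simp [h, h1, sgn2_zero]

lemma univ_eq_pows [DecidableEq F] (α : F) (m : ℕ) (hm : 0 < m) (hα : orderOf α = m)
    (hc : Fintype.card F = m + 1) :
    (Finset.univ : Finset F) = insert 0 ((Finset.range m).image (fun j => α ^ j)) := by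
  symm
  have hα0 : α ≠ 0 := by
    rintro rfl
    rw [orderOf_zero] at hα
    omega
  rw [← Finset.card_eq_iff_eq_univ, Finset.card_insert_of_notMem, Finset.card_image_of_injOn, hc,
    Finset.card_range]
  · intro i hi j hj h
    simp only [Finset.coe_range, Set.mem_Iio] at hi hj
    exact pow_injOn_Iio_orderOf (by simpa [hα] using hi) (by simpa [hα] using hj) h
  · simp [hα0]

lemma sum_cube (α : F) (n : ℕ) (hn : 0 < n) (hα : orderOf α = 3 * n)
    (hc : Fintype.card F = 3 * n + 1) (f : F → ℤ) :
    ∑ x : F, f (x ^ 3) = f 0 + 3 * ∑ i ∈ Finset.range n, f ((α ^ 3) ^ i) := by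
  classical
  have hα0 : α ≠ 0 := by
    rintro rfl
    rw [orderOf_zero] at hα
    omega
  have hp : (α ^ 3) ^ n = 1 := by rw [← pow_mul, ← hα, pow_orderOf_eq_one]
  rw [univ_eq_pows α (3 * n) (by omega) hα hc, Finset.sum_insert (by simp [hα0]),
    Finset.sum_image]
  · have e : 3 * n = n + (n + n) := by ring
    rw [e, Finset.sum_range_add, Finset.sum_range_add]
    have : ∀ i, (α ^ i) ^ 3 = (α ^ 3) ^ i := fun i => by rw [← pow_mul, ← pow_mul, mul_comm]
    simp only [this]
    simp only [pow_add _ n, hp, one_mul]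
    rw [zero_pow (by norm_num)]
    ring
  · intro i hi j hj h
    simp only [Finset.coe_range, Set.mem_Iio] at hi hj
    exact pow_injOn_Iio_orderOf (by simpa [hα] using hi) (by simpa [hα] using hj) h

lemma inj_beta (α : F) (n : ℕ) (hα : orderOf α = 3 * n) {i j : ℕ} (hi : i < n) (hj : j < n)
    (h : (α ^ 3) ^ i = (α ^ 3) ^ j) : i = j := by
  rw [← pow_mul, ← pow_mul] at h
  have := pow_injOn_Iio_orderOf (x := α) (x₁ := 3 * i) (x₂ := 3 * j)
    (by simp [hα]; omega) (by simp [hα]; omega) h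
  omega

open Classical in
/-- The exponential sum values. -/
lemma T_val (s n : ℕ) (α : F) (hn : 0 < n) (hα : orderOf α = 3 * n)
    (hc : Fintype.card F = 3 * n + 1) (hq : 4 ^ s = 3 * n + 1)
    (h1 : Algebra.trace (ZMod 2) F 1 = 0) (a : F) (ha : a ≠ 0) :
    1 + 3 * ∑ i ∈ Finset.range n, sgn2 (Algebra.trace (ZMod 2) F (a * (α ^ 3) ^ i)) =
      if ∃ i < n, a * (α ^ 3) ^ i = 1 then - ((-1) ^ s * 2 ^ (s + 1)) else (-1) ^ s * 2 ^ s := by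
  have hS := sum_cube α n hn hα hc (fun y => sgn2 (Algebra.trace (ZMod 2) F (a * y)))
  have hK := sum_cube α n hn hα hc (fun y => if a * y = 1 then 1 else 0)
  have hsq := S_sq a ha h1
  simp only [mul_zero, map_zero, sgn2_zero] at hS
  simp only [mul_zero, zero_ne_one, if_false, zero_add] at hK
  rw [hS, hK, hc, ← hq] at hsq
  set T := ∑ i ∈ Finset.range n, sgn2 (Algebra.trace (ZMod 2) F (a * (α ^ 3) ^ i)) with hT
  have hα0 : α ≠ 0 := by
    rintro rfl
    rw [orderOf_zero] at hα
    omega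
  have e4 : ((4 ^ s : ℕ) : ℤ) = (2 ^ s) ^ 2 := by
    push_cast
    rw [← pow_mul, mul_comm, pow_mul]; norm_num
  have hmod : ∃ k : ℤ, (2 : ℤ) ^ s = (-1) ^ s + 3 * k := by
    have : (3 : ℤ) ∣ 2 ^ s - (-1) ^ s := by
      have := sub_dvd_pow_sub_pow (2 : ℤ) (-1) s
      norm_num at this
      simpa using this
    obtain ⟨k, hk⟩ := this
    exact ⟨k, by linarith⟩
  obtain ⟨k, hk⟩ := hmod
  rw [e4] at hsq
  split_ifs with hex
  · obtain ⟨i, hi, hai⟩ := hex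
    have : (∑ i ∈ Finset.range n, if a * (α ^ 3) ^ i = 1 then (1 : ℤ) else 0) = 1 := by
      rw [Finset.sum_eq_single i]
      · simp [hai]
      · intro j hj hji
        rw [if_neg]
        intro h
        apply hji
        exact inj_beta α n hα (Finset.mem_range.mp hj) hi (mul_left_cancel₀ ha (h.trans hai.symm))
      · intro h; simp at h; omega
    rw [this] at hsq
    have h4 : (1 + 3 * T) ^ 2 = (2 ^ (s + 1)) ^ 2 := by rw [hsq]; ring
    rcases sq_eq_sq_iff_eq_or_eq_neg.mp h4 with h | h <;>
    rcases neg_one_pow_eq_or ℤ s with h' | h' <;> rw [h'] at hk ⊢ <;> rw [pow_succ] at h ⊢ <;>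
      rw [hk] at h ⊢ <;> omega
  · have : (∑ i ∈ Finset.range n, if a * (α ^ 3) ^ i = 1 then (1 : ℤ) else 0) = 0 := by
      apply Finset.sum_eq_zero
      intro i hi
      rw [if_neg]
      intro h
      exact hex ⟨i, Finset.mem_range.mp hi, h⟩
    rw [this] at hsq
    have h4 : (1 + 3 * T) ^ 2 = (2 ^ s) ^ 2 := by rw [hsq]; ring
    rcases sq_eq_sq_iff_eq_or_eq_neg.mp h4 with h | h <;>
    rcases neg_one_pow_eq_or ℤ s with h' | h' <;> rw [h'] at hk ⊢ <;> 
      rw [hk] at h ⊢ <;> omega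

end field

section codes
set_option linter.unusedSectionVars false

lemma mem_dualCode {N : ℕ} (C : Submodule (ZMod 2) (Fin N → ZMod 2)) (b : Fin N → ZMod 2) :
    b ∈ dualCode C ↔ ∀ c ∈ C, ∑ i, b i * c i = 0 := Iff.rfl

/-- The dot product bilinear form. -/
def dotB (N : ℕ) : LinearMap.BilinForm (ZMod 2) (Fin N → ZMod 2) :=
  dotProductBilin (ZMod 2) (ZMod 2)

lemma dotB_apply (N : ℕ) (x y : Fin N → ZMod 2) : dotB N x y = ∑ i, x i * y i := rfl

lemma dual_eq_orth {N : ℕ} (C : Submodule (ZMod 2) (Fin N → ZMod 2)) :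
    dualCode C = (dotB N).orthogonal C := by
  ext b
  rw [mem_dualCode, LinearMap.BilinForm.mem_orthogonal_iff]
  refine forall_congr' fun c => forall_congr' fun _ => ?_
  rw [dotB_apply]
  simp only [mul_comm]

lemma dot_refl (N : ℕ) : (dotB N).IsRefl := by
  intro x y h
  rw [dotB_apply] at h ⊢
  simpa only [mul_comm] using h

lemma dot_nondeg (N : ℕ) : (dotB N).Nondegenerate := by
  have h : ∀ x : Fin N → ZMod 2, (∀ y, dotB N x y = 0) → x = 0 := by
    intro x hx
    funext i
    have := hx (Pi.single i 1)
    simpa [dotB_apply, Pi.single_apply] using this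
  exact ⟨h, fun x hx => h x fun y => dot_refl N _ _ (hx y)⟩

lemma dual_dual {N : ℕ} (C : Submodule (ZMod 2) (Fin N → ZMod 2)) :
    dualCode (dualCode C) = C := by
  rw [dual_eq_orth, dual_eq_orth]
  exact LinearMap.BilinForm.orthogonal_orthogonal (dot_nondeg N) (dot_refl N) C

lemma finrank_dual {N : ℕ} (C : Submodule (ZMod 2) (Fin N → ZMod 2)) :
    Module.finrank (ZMod 2) (dualCode C) = N - Module.finrank (ZMod 2) C := by
  rw [dual_eq_orth, LinearMap.BilinForm.finrank_orthogonal (dot_nondeg N)]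
  simp

lemma hammingNorm_indicator_le {N : ℕ} (A B : Finset (Fin N)) (hA : A.card = 2) (hB : B.card = 2) :
    hammingNorm ((fun i => if i ∈ A then 1 else 0) - (fun i => if i ∈ B then 1 else 0) : Fin N → ZMod 2) ≤ 4 := by
  have : Finset.univ.filter (fun i => ((fun i => if i ∈ A then 1 else 0) - (fun i => if i ∈ B then 1 else 0) : Fin N → ZMod 2) i ≠ 0) ⊆ A ∪ B := by
    intro i hi
    rw [Finset.mem_filter] at hi
    by_contra h
    rw [Finset.mem_union, not_or] at h
    apply hi.2
    simp [h.1, h.2]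
  unfold hammingNorm
  refine (Finset.card_le_card this).trans ((Finset.card_union_le _ _).trans ?_)
  omega

lemma minDist_le_of_mem {N : ℕ} (D : Submodule (ZMod 2) (Fin N → ZMod 2)) (c : Fin N → ZMod 2)
    (hc : c ∈ D) (h0 : c ≠ 0) : minDist D ≤ hammingNorm c :=
  Nat.sInf_le ⟨c, hc, h0, rfl⟩

lemma packing_s16 {N : ℕ} (D : Submodule (ZMod 2) (Fin N → ZMod 2))
    (h : 2 ^ (N - Module.finrank (ZMod 2) D) < N.choose 2) : minDist D ≤ 4 := by
  classical
  let f : Finset (Fin N) → ((Fin N → ZMod 2) ⧸ D) := fun A =>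
    Submodule.Quotient.mk (fun i => if i ∈ A then 1 else 0)
  have : Fintype ((Fin N → ZMod 2) ⧸ D) := Fintype.ofFinite _
  have hcard : Fintype.card ((Fin N → ZMod 2) ⧸ D) = 2 ^ (N - Module.finrank (ZMod 2) D) := by
    rw [Module.card_eq_pow_finrank (K := ZMod 2), ZMod.card, Submodule.finrank_quotient]
    simp
  obtain ⟨A, hA, B, hB, hAB, hf⟩ := Finset.exists_ne_map_eq_of_card_lt_of_maps_to
    (s := Finset.powersetCard 2 (Finset.univ : Finset (Fin N))) (t := Finset.univ) (f := f)
    (by rw [Finset.card_univ, hcard, Finset.card_powersetCard]; simpa using h) (by intro x _; simp)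
  rw [Finset.mem_powersetCard] at hA hB
  refine (minDist_le_of_mem D _ ((Submodule.Quotient.eq D).mp hf) ?_).trans
    (hammingNorm_indicator_le A B hA.2 hB.2)
  intro h0
  apply hAB
  ext i
  have := congrFun h0 i
  by_cases h1 : i ∈ A <;> by_cases h2 : i ∈ B <;> simp_all

variable {F : Type} [Field F] [Fintype F] [Algebra (ZMod 2) F]

/-- The encoder of the dual of the extended code. -/
noncomputable def encMap (n : ℕ) (β : F) : (F × ZMod 2) →ₗ[ZMod 2] (Fin (n + 1) → ZMod 2) where
  toFun p := Fin.snoc (α := fun _ => ZMod 2) (fun i : Fin n => Algebra.trace (ZMod 2) F (p.1 * β ^ (i : ℕ)) + p.2) p.2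
  map_add' p q := by
    funext j
    refine Fin.lastCases ?_ (fun i => ?_) j
    · simp
    · simp [add_mul]; ring
  map_smul' r p := by
    funext j
    refine Fin.lastCases ?_ (fun i => ?_) j
    · simp
    · simp [mul_add]

lemma enc_castSucc (n : ℕ) (β : F) (p) (i : Fin n) :
    encMap n β p i.castSucc = Algebra.trace (ZMod 2) F (p.1 * β ^ (i : ℕ)) + p.2 := by
  simp [encMap]

lemma enc_last (n : ℕ) (β : F) (p) : encMap n β p (Fin.last n) = p.2 := by
  simp [encMap]

lemma mem_ext (n : ℕ) (β : F) (c : Fin (n + 1) → ZMod 2) :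
    c ∈ extendedCode (BCHCode n β {1}) ↔
      ∑ i : Fin n, c i.castSucc • β ^ (i : ℕ) = 0 ∧ ∑ i, c i = 0 := by
  constructor
  · rintro ⟨b, hb, rfl⟩
    have hb' : ∀ j ∈ ({1} : Finset ℕ), ∑ i : Fin n, b i • β ^ (j * (i : ℕ)) = 0 := hb
    have := hb' 1 (by simp)
    constructor
    · simpa [extendMap] using this
    · rw [Fin.sum_univ_castSucc]
      simp [extendMap, CharTwo.add_self_eq_zero]
  · rintro ⟨h1, h2⟩
    refine ⟨fun i => c i.castSucc, ?_, ?_⟩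
    · show ∀ j ∈ ({1} : Finset ℕ), ∑ i : Fin n, c i.castSucc • β ^ (j * (i : ℕ)) = 0
      simpa using h1
    · funext j
      rw [Fin.sum_univ_castSucc, CharTwo.add_eq_zero] at h2
      refine Fin.lastCases ?_ (fun i => ?_) j
      · simp [extendMap, h2]
      · simp [extendMap]

lemma ext_eq_dual (n : ℕ) (β : F) :
    extendedCode (BCHCode n β {1}) = dualCode (LinearMap.range (encMap n β)) := by
  ext c
  have key : ∀ p : F × ZMod 2, ∑ i, c i * encMap n β p i =
      Algebra.trace (ZMod 2) F (p.1 * ∑ i : Fin n, c i.castSucc • β ^ (i : ℕ)) +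
        (∑ i, c i) * p.2 := by
    intro p
    rw [Fin.sum_univ_castSucc, Fin.sum_univ_castSucc]
    simp only [enc_castSucc, enc_last, mul_add, Finset.mul_sum, map_sum, Finset.sum_add_distrib,
      add_mul, Finset.sum_mul, mul_smul_comm, map_smul, smul_eq_mul]
    ring
  rw [mem_ext, mem_dualCode]
  constructor
  · rintro ⟨h1, h2⟩ _ ⟨p, rfl⟩
    rw [key, h1, h2]; simp
  · intro h
    constructor
    · by_contra hne
      obtain ⟨y, hy⟩ := exists_trace_one _ hne
      have := h _ ⟨(y, 0), rfl⟩
      rw [key, mul_comm, hy] at this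
      simp at this
    · have := h _ ⟨(0, 1), rfl⟩
      rw [key] at this
      simpa using this

lemma enc_norm0 (n : ℕ) (β : F) (a : F) :
    ∑ i ∈ Finset.range n, sgn2 (Algebra.trace (ZMod 2) F (a * β ^ i)) =
      (n : ℤ) - 2 * (hammingNorm (encMap n β (a, 0)) : ℤ) := by
  have := sum_sgn2 (encMap n β (a, 0))
  rw [Fin.sum_univ_castSucc] at this
  simp only [enc_castSucc, enc_last, add_zero, sgn2_zero] at this
  rw [Fin.sum_univ_eq_sum_range (fun i => sgn2 (Algebra.trace (ZMod 2) F (a * β ^ i))) n] at this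
  push_cast at this
  linarith

lemma enc_norm1 (n : ℕ) (β : F) (a : F) :
    hammingNorm (encMap n β (a, 1)) + hammingNorm (encMap n β (a, 0)) = n + 1 := by
  have h0 := sum_sgn2 (encMap n β (a, 0))
  have h1 := sum_sgn2 (encMap n β (a, 1))
  rw [Fin.sum_univ_castSucc] at h0 h1
  simp only [enc_castSucc, enc_last, add_zero, sgn2_zero, sgn2_add, sgn2_one, ← Finset.sum_mul] at h0 h1
  push_cast at h0 h1
  zify
  linarith

lemma minDist_ge (n : ℕ) (β : F) (hβ0 : β ≠ 0)
    (hinj : ∀ i j : ℕ, i < n → j < n → β ^ i = β ^ j → i = j) (c : Fin (n + 1) → ZMod 2)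
    (hc : c ∈ extendedCode (BCHCode n β {1})) (h0 : c ≠ 0) : 4 ≤ hammingNorm c := by
  classical
  rw [mem_ext] at hc
  obtain ⟨hc1, hc2⟩ := hc
  have hone : ∀ x : ZMod 2, x ≠ 0 → x = 1 := by decide
  have heven : Even (hammingNorm c) := by
    have : ∑ i, c i = ((hammingNorm c : ℕ) : ZMod 2) := by
      unfold hammingNorm
      rw [Finset.card_filter]
      push_cast
      refine Finset.sum_congr rfl fun i _ => ?_
      by_cases h : c i = 0
      · simp [h]
      · simp [hone _ h]
    rw [this] at hc2
    exact (ZMod.natCast_eq_zero_iff_even).mp hc2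
  have hpos : hammingNorm c ≠ 0 := by simpa using h0
  have hne2 : hammingNorm c ≠ 2 := by
    intro h2
    obtain ⟨x, y, hxy, hS⟩ := Finset.card_eq_two.mp h2
    have hx : ∀ i, c i = if i = x ∨ i = y then 1 else 0 := by
      intro i
      have : i ∈ ({i | c i ≠ 0} : Finset (Fin (n+1))) ↔ i ∈ ({x, y} : Finset _) := by rw [hS]
      simp only [Finset.mem_filter, Finset.mem_univ, true_and, Finset.mem_insert,
        Finset.mem_singleton] at this
      split_ifs with h
      · exact hone _ (this.mpr h)
      · by_contra hh; exact h (this.mp hh)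
    have h3 : ∑ i : Fin (n+1), c i • (if (i : ℕ) < n then β ^ (i : ℕ) else 0) = 0 := by
      rw [Fin.sum_univ_castSucc]; simpa using hc1
    have h4 : ∑ i : Fin (n+1), c i • (if (i : ℕ) < n then β ^ (i : ℕ) else 0) =
      ∑ i ∈ ({x, y} : Finset (Fin (n+1))), (if (i : ℕ) < n then β ^ (i : ℕ) else 0) := by
      rw [← Finset.sum_subset (Finset.subset_univ {x, y})]
      · refine Finset.sum_congr rfl fun i hi => ?_
        rw [hx, if_pos (by simpa using hi), one_smul]
      · intro i _ hi
        rw [hx, if_neg (by simpa using hi), zero_smul]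
    rw [h4, Finset.sum_pair hxy] at h3
    have : CharP F 2 := charP_of_injective_algebraMap (algebraMap (ZMod 2) F).injective 2
    rw [CharTwo.add_eq_zero] at h3
    have hp : ∀ i, β ^ i ≠ 0 := fun i => pow_ne_zero i hβ0
    apply hxy
    apply Fin.ext
    split_ifs at h3 with ha hb hb
    · exact hinj _ _ ha hb h3
    · exact absurd h3 (hp _)
    · exact absurd h3.symm (hp _)
    · omega
  obtain ⟨k, hk⟩ := heven
  omega

end codes

section final
variable {F : Type} [Field F] [Fintype F] [Algebra (ZMod 2) F]
set_option linter.unusedSectionVars false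

lemma count_sum (n w1 w2 : ℕ) (α : F) (hn : 0 < n) (hα : orderOf α = 3 * n)
    (hc : Fintype.card F = 3 * n + 1) (W : F → ℕ) (hW0 : W 0 = 0)
    (hW1 : ∀ a, a ≠ 0 → (∃ i < n, a * (α ^ 3) ^ i = 1) → W a = w1)
    (hW2 : ∀ a, a ≠ 0 → (¬ ∃ i < n, a * (α ^ 3) ^ i = 1) → W a = w2) (g : ℕ → ℕ) :
    ∑ a, g (W a) = g 0 + n * g w1 + 2 * n * g w2 := by
  classical
  have hα0 : α ≠ 0 := by
    rintro rfl
    rw [orderOf_zero] at hα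
    omega
  let Q : Finset F := (Finset.range n).image (fun i => ((α ^ 3) ^ i)⁻¹)
  have hQc : Q.card = n := by
    rw [Finset.card_image_of_injOn, Finset.card_range]
    intro i hi j hj h
    simp only [Finset.coe_range, Set.mem_Iio] at hi hj
    exact inj_beta α n hα hi hj (inv_injective h)
  have hp : ∀ i, (α ^ 3) ^ i ≠ 0 := fun i => pow_ne_zero _ (pow_ne_zero _ hα0)
  have hQ : ∀ a, a ∈ Q ↔ ∃ i < n, a * (α ^ 3) ^ i = 1 := by
    intro a
    simp only [Q, Finset.mem_image, Finset.mem_range]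
    refine exists_congr fun i => and_congr_right fun _ => ?_
    rw [mul_eq_one_iff_eq_inv₀ (hp i), eq_comm]
  have hQ0 : ∀ a ∈ Q, a ≠ 0 := by
    rintro a ha rfl
    obtain ⟨i, _, h⟩ := (hQ 0).mp ha
    simp at h
  have hsub : Q ⊆ Finset.univ.erase 0 := fun a ha => by simp [hQ0 a ha]
  have hcd : (Finset.univ.erase (0 : F) \ Q).card = 2 * n := by
    rw [Finset.card_sdiff_of_subset hsub, Finset.card_erase_of_mem (Finset.mem_univ _),
      Finset.card_univ, hc, hQc]
    omega
  rw [← Finset.add_sum_erase _ _ (Finset.mem_univ (0 : F)), ← Finset.sum_sdiff hsub, hW0,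
    Finset.sum_congr rfl (g := fun _ => g w2), Finset.sum_congr (s₁ := Q) rfl (g := fun _ => g w1)]
  · simp only [Finset.sum_const, hQc, hcd, smul_eq_mul]
    ring
  · intro a ha
    rw [hW1 a (hQ0 a ha) ((hQ a).mp ha)]
  · intro a ha
    simp only [Finset.mem_sdiff, Finset.mem_erase] at ha
    rw [hW2 a ha.1.1 (fun h => ha.2 ((hQ a).mpr h))]

lemma weightCount_range (n : ℕ) (β : F) (hinj : Function.Injective (encMap n β)) (w : ℕ) :
    weightCount (LinearMap.range (encMap n β)) w =
      ∑ a : F, ((if hammingNorm (encMap n β (a, 0)) = w then 1 else 0) +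
        (if n + 1 - hammingNorm (encMap n β (a, 0)) = w then 1 else 0)) := by
  classical
  have h1 : {c : Fin (n + 1) → ZMod 2 | c ∈ LinearMap.range (encMap n β) ∧ hammingNorm c = w} =
      (encMap n β) '' {p | hammingNorm (encMap n β p) = w} := by
    ext c
    constructor
    · rintro ⟨⟨p, rfl⟩, h⟩
      exact ⟨p, h, rfl⟩
    · rintro ⟨p, h, rfl⟩
      exact ⟨⟨p, rfl⟩, h⟩
  have h2 : {p : F × ZMod 2 | hammingNorm (encMap n β p) = w} =
      ((Finset.univ.filter fun p : F × ZMod 2 => hammingNorm (encMap n β p) = w : Finset _) :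
        Set (F × ZMod 2)) := by
    ext p; simp
  unfold weightCount
  rw [h1, Set.ncard_image_of_injective _ hinj, h2, Set.ncard_coe_finset, Finset.card_filter,
    Fintype.sum_prod_type]
  refine Finset.sum_congr rfl fun a _ => ?_
  have e : ∀ f : ZMod 2 → ℕ, ∑ b, f b = f 0 + f 1 := fun f => Fin.sum_univ_two f
  rw [e]
  have := enc_norm1 n β a
  have h3 : hammingNorm (encMap n β (a, 1)) = n + 1 - hammingNorm (encMap n β (a, 0)) := by omega
  rw [h3]

theorem main_aux (s : ℕ) (hs : 4 ≤ s) (n : ℕ) (hq : 4 ^ s = 3 * n + 1)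
    (hc : Fintype.card F = 3 * n + 1) (hfr : Module.finrank (ZMod 2) F = 2 * s)
    (α : F) (hα : orderOf α = 3 * n)
    (w1 w2 : ℕ)
    (hw1 : (3 * w1 : ℤ) = 2 ^ (2 * s - 1) + (-1) ^ s * 2 ^ s)
    (hw2 : (3 * w2 : ℤ) = 2 ^ (2 * s - 1) - (-1) ^ s * 2 ^ (s - 1))
    (E : Submodule (ZMod 2) (Fin (n + 1) → ZMod 2))
    (hE : E = dualCode (extendedCode (BCHCode n (α ^ 3) {1}))) :
    Module.finrank (ZMod 2) (extendedCode (BCHCode n (α ^ 3) {1})) = n - 2 * s ∧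
    minDist (extendedCode (BCHCode n (α ^ 3) {1})) = 4 ∧
    (∀ D : Submodule (ZMod 2) (Fin (n + 1) → ZMod 2),
      Module.finrank (ZMod 2) D = n - 2 * s → minDist D ≤ 4) ∧
    Module.finrank (ZMod 2) E = 2 * s + 1 ∧
    weightCount E 0 = 1 ∧
    weightCount E w1 = n ∧
    weightCount E w2 = 2 * n ∧
    weightCount E (n + 1 - w1) = n ∧
    weightCount E (n + 1 - w2) = 2 * n ∧
    weightCount E (n + 1) = 1 ∧
    ∀ w : ℕ, w ≠ 0 → w ≠ w1 → w ≠ w2 → w ≠ n + 1 - w1 → w ≠ n + 1 - w2 →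
      w ≠ n + 1 → weightCount E w = 0 := by
  classical
  -- numerics
  obtain ⟨t, rfl⟩ : ∃ t, s = t + 4 := ⟨s - 4, by omega⟩
  have hn85 : 85 ≤ n := by
    have : 1 ≤ 4 ^ t := Nat.one_le_pow _ _ (by norm_num)
    rw [pow_add] at hq
    omega
  have hlin : 2 * (t + 4) < n := by
    have : t < 4 ^ t := Nat.lt_pow_self (by norm_num)
    rw [pow_add] at hq
    omega
  have hn : 0 < n := by omega
  have hα0 : α ≠ 0 := by
    rintro rfl
    rw [orderOf_zero] at hα
    omega
  have hp1 : 2 * (2 : ℤ) ^ (2 * (t + 4) - 1) = 3 * n + 1 := by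
    rw [← pow_succ', show 2 * (t + 4) - 1 + 1 = 2 * (t + 4) by omega, pow_mul]
    exact_mod_cast hq
  obtain ⟨P, hP, hP1⟩ : ∃ P : ℤ, P = 2 ^ t ∧ 1 ≤ P := ⟨2 ^ t, rfl, one_le_pow₀ (by norm_num)⟩
  have hPn : 256 * (P * P) = 3 * n + 1 := by
    have : (4 : ℤ) ^ (t + 4) = 3 * n + 1 := by exact_mod_cast hq
    rw [← this, hP, ← mul_pow, pow_add]; norm_num; ring
  have hPP : P ≤ P * P := by nlinarith
  have e1 : (2 : ℤ) ^ (t + 4) = 16 * P := by rw [hP]; ring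
  have e2 : (2 : ℤ) ^ (t + 4 - 1) = 8 * P := by
    rw [hP, show t + 4 - 1 = t + 3 by omega]; ring
  have e3 : (2 : ℤ) ^ (t + 4 + 1) = 32 * P := by rw [hP]; ring
  have htr : Algebra.trace (ZMod 2) F 1 = 0 := by
    have := Algebra.trace_algebraMap (R := ZMod 2) (S := F) (1 : ZMod 2)
    rw [map_one, hfr] at this
    rw [this, mul_smul, two_nsmul, CharTwo.add_self_eq_zero]
  generalize hPow : (2 : ℤ) ^ (2 * (t + 4) - 1) = M at *
  rw [e1] at hw1
  rw [e2] at hw2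
  have hT := T_val (t + 4) n α hn hα hc hq htr
  simp only [enc_norm0, e1, e3] at hT
  have hW0 : hammingNorm (encMap n (α ^ 3) (0, 0)) = 0 := by
    rw [show ((0 : F), (0 : ZMod 2)) = 0 from rfl, map_zero, hammingNorm_zero]
  obtain ⟨ε, hε⟩ : ∃ ε : ℤ, ε = (-1) ^ (t + 4) := ⟨_, rfl⟩
  have hε1 : ε = 1 ∨ ε = -1 := by rw [hε]; exact neg_one_pow_eq_or ℤ _
  rw [← hε] at hw1 hw2 hT
  have hW1 : ∀ a, a ≠ 0 → (∃ i < n, a * (α ^ 3) ^ i = 1) →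
      hammingNorm (encMap n (α ^ 3) (a, 0)) = w1 := by
    intro a ha hex
    have := hT a ha
    rw [if_pos hex] at this
    rcases hε1 with h | h <;> rw [h] at this hw1 <;> omega
  have hW2 : ∀ a, a ≠ 0 → (¬ ∃ i < n, a * (α ^ 3) ^ i = 1) →
      hammingNorm (encMap n (α ^ 3) (a, 0)) = w2 := by
    intro a ha hex
    have := hT a ha
    rw [if_neg hex] at this
    rcases hε1 with h | h <;> rw [h] at this hw2 <;> omega
  have f1 : w1 ≠ 0 := by rcases hε1 with h | h <;> rw [h] at hw1 <;> omega
  have f2 : w2 ≠ 0 := by rcases hε1 with h | h <;> rw [h] at hw2 <;> omega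
  have f3 : w1 < n + 1 := by rcases hε1 with h | h <;> rw [h] at hw1 <;> omega
  have f4 : w2 < n + 1 := by rcases hε1 with h | h <;> rw [h] at hw2 <;> omega
  have f5 : w1 ≠ w2 := by rcases hε1 with h | h <;> rw [h] at hw1 hw2 <;> omega
  have f6 : n + 1 - w1 ≠ w1 := by rcases hε1 with h | h <;> rw [h] at hw1 <;> omega
  have f7 : n + 1 - w1 ≠ w2 := by rcases hε1 with h | h <;> rw [h] at hw1 hw2 <;> omega
  have f8 : n + 1 - w2 ≠ w2 := by rcases hε1 with h | h <;> rw [h] at hw2 <;> omega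
  clear hT hw1 hw2 hp1 hPn hPP e1 e2 e3
  have hinj : Function.Injective (encMap n (α ^ 3)) := by
    rw [injective_iff_map_eq_zero]
    rintro ⟨a, b⟩ h
    have hb : b = 0 := by
      have := congrFun h (Fin.last n)
      rwa [enc_last] at this
    subst hb
    by_cases ha : a = 0
    · rw [ha]; rfl
    exfalso
    have hz : hammingNorm (encMap n (α ^ 3) (a, 0)) = 0 := by rw [h, hammingNorm_zero]
    by_cases hex : ∃ i < n, a * (α ^ 3) ^ i = 1
    · exact f1 ((hW1 a ha hex).symm.trans hz)
    · exact f2 ((hW2 a ha hex).symm.trans hz)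
  have hER : E = LinearMap.range (encMap n (α ^ 3)) := by
    rw [hE, ext_eq_dual, dual_dual]
  have hrank : Module.finrank (ZMod 2) (LinearMap.range (encMap n (α ^ 3))) = 2 * (t + 4) + 1 := by
    rw [LinearMap.finrank_range_of_inj hinj, Module.finrank_prod, hfr, Module.finrank_self]
  have hdim : Module.finrank (ZMod 2) (extendedCode (BCHCode n (α ^ 3) {1})) =
      n - 2 * (t + 4) := by
    rw [ext_eq_dual, finrank_dual, hrank]
    omega
  have hopt : ∀ D : Submodule (ZMod 2) (Fin (n + 1) → ZMod 2),
      Module.finrank (ZMod 2) D = n - 2 * (t + 4) → minDist D ≤ 4 := by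
    intro D hD
    apply packing_s16
    rw [hD, show n + 1 - (n - 2 * (t + 4)) = 2 * (t + 4) + 1 by omega, pow_succ, pow_mul,
      show 2 ^ 2 = 4 by norm_num, hq, Nat.choose_two_right, Nat.lt_div_iff_mul_lt (by norm_num)]
    simp only [Nat.add_sub_cancel]
    have : 86 * n ≤ (n + 1) * n := Nat.mul_le_mul_right n (by omega)
    omega
  have hwc : ∀ w, weightCount E w =
      ((if 0 = w then 1 else 0) + (if n + 1 = w then 1 else 0)) +
      n * ((if w1 = w then 1 else 0) + (if n + 1 - w1 = w then 1 else 0)) +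
      2 * n * ((if w2 = w then 1 else 0) + (if n + 1 - w2 = w then 1 else 0)) := by
    intro w
    rw [hER, weightCount_range n _ hinj w]
    exact count_sum n w1 w2 α hn hα hc (fun a => hammingNorm (encMap n (α ^ 3) (a, 0))) hW0 hW1 hW2
      (fun v => (if v = w then 1 else 0) + (if n + 1 - v = w then 1 else 0))
  refine ⟨hdim, ?_, hopt, ?_, ?_, ?_, ?_, ?_, ?_, ?_, ?_⟩
  · apply le_antisymm (hopt _ hdim)
    unfold minDist
    apply le_csInf
    · have hne : extendedCode (BCHCode n (α ^ 3) {1}) ≠ ⊥ := by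
        intro h
        rw [h, finrank_bot] at hdim
        omega
      obtain ⟨c, hc, h0⟩ := Submodule.exists_mem_ne_zero_of_ne_bot hne
      exact ⟨_, c, hc, h0, rfl⟩
    · rintro _ ⟨c, hc, h0, rfl⟩
      exact minDist_ge n (α ^ 3) (pow_ne_zero _ hα0)
        (fun i j hi hj h => inj_beta α n hα hi hj h) c hc h0
  · rw [hER, hrank]
  · rw [hwc, if_pos rfl, if_neg (by omega), if_neg (by omega), if_neg (by omega),
      if_neg (by omega), if_neg (by omega)]
    omega
  · rw [hwc, if_neg (by omega), if_neg (by omega), if_pos rfl, if_neg (by omega),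
      if_neg (by omega), if_neg (by omega)]
    omega
  · rw [hwc, if_neg (by omega), if_neg (by omega), if_neg (by omega), if_neg (by omega),
      if_pos rfl, if_neg (by omega)]
    omega
  · rw [hwc, if_neg (by omega), if_neg (by omega), if_neg (by omega), if_pos rfl,
      if_neg (by omega), if_neg (by omega)]
    omega
  · rw [hwc, if_neg (by omega), if_neg (by omega), if_neg (by omega), if_neg (by omega),
      if_neg (by omega), if_pos rfl]
    omega
  · rw [hwc, if_neg (by omega), if_pos rfl, if_neg (by omega), if_neg (by omega),
      if_neg (by omega), if_neg (by omega)]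
    omega
  · intro w g1 g2 g3 g4 g5 g6
    rw [hwc, if_neg g1.symm, if_neg g6.symm, if_neg g2.symm, if_neg g4.symm,
      if_neg g3.symm, if_neg g5.symm]
    omega

end final

theorem stmt_16 (s : ℕ) (hs : 4 ≤ s) (n : ℕ) (hn : n = (4 ^ s - 1) / 3)
    (α : GaloisField 2 (2 * s)) (hα : orderOf α = 2 ^ (2 * s) - 1)
    (β : GaloisField 2 (2 * s)) (hβ : β = α ^ (3)) (w1 w2 : ℕ)
    (hw1 : (3 * w1 : ℤ) = 2 ^ (2 * s - 1) + (-1) ^ s * 2 ^ s)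
    (hw2 : (3 * w2 : ℤ) = 2 ^ (2 * s - 1) - (-1) ^ s * 2 ^ (s - 1))
    (E : Submodule (ZMod 2) (Fin (n + 1) → ZMod 2))
    (hE : E = dualCode (extendedCode (BCHCode n β {1}))) :
    Module.finrank (ZMod 2) (extendedCode (BCHCode n β {1})) = n - 2 * s ∧
    minDist (extendedCode (BCHCode n β {1})) = 4 ∧
    (∀ D : Submodule (ZMod 2) (Fin (n + 1) → ZMod 2),
      Module.finrank (ZMod 2) D = n - 2 * s → minDist D ≤ 4) ∧
    Module.finrank (ZMod 2) E = 2 * s + 1 ∧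
    weightCount E 0 = 1 ∧
    weightCount E w1 = n ∧
    weightCount E w2 = 2 * n ∧
    weightCount E (n + 1 - w1) = n ∧
    weightCount E (n + 1 - w2) = 2 * n ∧
    weightCount E (n + 1) = 1 ∧
    ∀ w : ℕ, w ≠ 0 → w ≠ w1 → w ≠ w2 → w ≠ n + 1 - w1 → w ≠ n + 1 - w2 →
      w ≠ n + 1 → weightCount E w = 0 := by
  subst hβ
  have hmod : 4 ^ s % 3 = 1 := by
    rw [Nat.pow_mod]; norm_num
  have hpos : 1 ≤ 4 ^ s := Nat.one_le_pow _ _ (by norm_num)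
  have hq : 4 ^ s = 3 * n + 1 := by omega
  have h24 : 2 ^ (2 * s) = 4 ^ s := by rw [pow_mul]; norm_num
  letI : Fintype (GaloisField 2 (2 * s)) := Fintype.ofFinite _
  have hc : Fintype.card (GaloisField 2 (2 * s)) = 3 * n + 1 := by
    rw [← Nat.card_eq_fintype_card, GaloisField.card 2 (2 * s) (by omega), h24, hq]
  exact main_aux s hs n hq hc (GaloisField.finrank 2 (by omega)) α
    (by rw [hα, h24, hq]; omega) w1 w2 hw1 hw2 E hE
end
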